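/- Suppose (θ1,…,θ8) ∈ [0,π/2]⁸ satisfies the equilibrium system and θi > 0 for some i. Then at least two of θ1, θ2, θ3, θ4 are ≥ θmin, and at least two of θ5, θ6, θ7, θ8 are ≥ θmin, where θmin = arctan(Qmin) and Qmin is the minimum of the eight quantities K1/L1, K2/L1, K2/L2, K1/L2, L2/K2, L2/K1, L1/K1, L1/K2. -/

import Mathlib

/-!
Write `A = I6 + I7`, `B = I7 + I8`, `C = I5 + I8`, `D = I5 + I6`. Then `A + C = B + D`, so `A < B`
and `C < D` cannot both hold. If `B ≤ A` and `A > 0`, the equation for `θ1` gives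
`tan θ1 = (A / B) * (K1 / L1) ≥ K1 / L1 ≥ Qmin` (or `θ1 = π / 2` when `B = 0`); if `D ≤ C` and
`C > 0`, the equation for `θ3` works in the same way. Hence one of `θ1, θ3` is at least `θmin`
(`arctan_le_or`), and the same argument applies to the pairs `θ2, θ4`; `θ5, θ7`; `θ6, θ8`.

This needs `I5 + I6 + I7 + I8 > 0` and `I1 + I2 + I3 + I4 > 0`. Since the density is positive almost
everywhere, `Ii > 0` whenever `θi > 0`, and an equation with positive numerator forces a positive
angle. So positivity of one of `θ1, …, θ4` passes to `θ5, …, θ8` and conversely, and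
non-triviality of the solution gives both sums positive.
-/

open MeasureTheory Real Set

noncomputable section

/-- The square `[-1,1]²`. -/
def Sq : Set (ℝ × ℝ) := Set.Icc (-1 : ℝ) 1 ×ˢ Set.Icc (-1 : ℝ) 1

/-- A probability density supported on `[-1,1]²`, continuous and positive
almost everywhere on the square. -/
structure IsNiceDensity (f : ℝ × ℝ → ℝ) : Prop where
  nonneg : ∀ p, 0 ≤ f p
  vanish : ∀ p ∉ Sq, f p = 0
  total : (∫ p in Sq, f p) = 1
  cont : ContinuousOn f Sq
  pos_ae : ∀ᵐ p ∂(volume.restrict Sq), 0 < f p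

/-- Region `R1(θ) = {0 < x ≤ 1, 0 < y < x·tan θ}`; for `θ = π/2` it is the full
open quadrant. -/
def R1 (θ : ℝ) : Set (ℝ × ℝ) :=
  {p | 0 < p.1 ∧ p.1 ≤ 1 ∧ 0 < p.2 ∧ (θ = π / 2 ∨ p.2 < p.1 * tan θ)}

def R2 (θ : ℝ) : Set (ℝ × ℝ) :=
  {p | -1 ≤ p.1 ∧ p.1 < 0 ∧ 0 < p.2 ∧ (θ = π / 2 ∨ p.2 < -p.1 * tan θ)}

def R3 (θ : ℝ) : Set (ℝ × ℝ) :=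
  {p | -1 ≤ p.1 ∧ p.1 < 0 ∧ 0 < -p.2 ∧ (θ = π / 2 ∨ -p.2 < -p.1 * tan θ)}

def R4 (θ : ℝ) : Set (ℝ × ℝ) :=
  {p | 0 < p.1 ∧ p.1 ≤ 1 ∧ 0 < -p.2 ∧ (θ = π / 2 ∨ -p.2 < p.1 * tan θ)}

def R5 (θ : ℝ) : Set (ℝ × ℝ) :=
  {p | 0 < p.2 ∧ p.2 ≤ 1 ∧ 0 < p.1 ∧ (θ = π / 2 ∨ p.1 < p.2 * tan θ)}

def R6 (θ : ℝ) : Set (ℝ × ℝ) :=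
  {p | 0 < p.2 ∧ p.2 ≤ 1 ∧ 0 < -p.1 ∧ (θ = π / 2 ∨ -p.1 < p.2 * tan θ)}

def R7 (θ : ℝ) : Set (ℝ × ℝ) :=
  {p | -1 ≤ p.2 ∧ p.2 < 0 ∧ 0 < -p.1 ∧ (θ = π / 2 ∨ -p.1 < -p.2 * tan θ)}

def R8 (θ : ℝ) : Set (ℝ × ℝ) :=
  {p | -1 ≤ p.2 ∧ p.2 < 0 ∧ 0 < p.1 ∧ (θ = π / 2 ∨ p.1 < -p.2 * tan θ)}

def I1 (f : ℝ × ℝ → ℝ) (θ : ℝ) : ℝ := ∫ p in R1 θ, f p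
def I2 (f : ℝ × ℝ → ℝ) (θ : ℝ) : ℝ := ∫ p in R2 θ, f p
def I3 (f : ℝ × ℝ → ℝ) (θ : ℝ) : ℝ := ∫ p in R3 θ, f p
def I4 (f : ℝ × ℝ → ℝ) (θ : ℝ) : ℝ := ∫ p in R4 θ, f p
def I5 (f : ℝ × ℝ → ℝ) (θ : ℝ) : ℝ := ∫ p in R5 θ, f p
def I6 (f : ℝ × ℝ → ℝ) (θ : ℝ) : ℝ := ∫ p in R6 θ, f p
def I7 (f : ℝ × ℝ → ℝ) (θ : ℝ) : ℝ := ∫ p in R7 θ, f p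
def I8 (f : ℝ × ℝ → ℝ) (θ : ℝ) : ℝ := ∫ p in R8 θ, f p

def Q1p (f : ℝ × ℝ → ℝ) : ℝ := ∫ p in {p ∈ Sq | 0 < p.1}, f p
def Q1m (f : ℝ × ℝ → ℝ) : ℝ := ∫ p in {p ∈ Sq | p.1 < 0}, f p
def Q2p (f : ℝ × ℝ → ℝ) : ℝ := ∫ p in {p ∈ Sq | 0 < p.2}, f p
def Q2m (f : ℝ × ℝ → ℝ) : ℝ := ∫ p in {p ∈ Sq | p.2 < 0}, f p

def K1 (f : ℝ × ℝ → ℝ) (n : ℕ) : ℝ := Q1m f ^ ((n - 1) / 2) * Q1p f ^ ((n - 3) / 2)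
def K2 (f : ℝ × ℝ → ℝ) (n : ℕ) : ℝ := Q1m f ^ ((n - 3) / 2) * Q1p f ^ ((n - 1) / 2)
def L1 (f : ℝ × ℝ → ℝ) (n : ℕ) : ℝ := Q2m f ^ ((n - 3) / 2) * Q2p f ^ ((n - 1) / 2)
def L2 (f : ℝ × ℝ → ℝ) (n : ℕ) : ℝ := Q2m f ^ ((n - 1) / 2) * Q2p f ^ ((n - 3) / 2)

/-- One equation of the equilibrium system: if the denominator is nonzero then
`θ = arctan (num / den)`; if the denominator is zero and the numerator positive then
`θ = π/2`; if both vanish, no constraint is imposed. -/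
def EqnHolds (θ num den : ℝ) : Prop :=
  if den = 0 then (num = 0 ∨ θ = π / 2) else θ = arctan (num / den)

/-- The equilibrium system of the vote-trading game. -/
def EqSys (f : ℝ × ℝ → ℝ) (n : ℕ) (θ1 θ2 θ3 θ4 θ5 θ6 θ7 θ8 : ℝ) : Prop :=
  EqnHolds θ1 ((I6 f θ6 + I7 f θ7) * K1 f n) ((I7 f θ7 + I8 f θ8) * L1 f n) ∧
  EqnHolds θ2 ((I5 f θ5 + I8 f θ8) * K2 f n) ((I7 f θ7 + I8 f θ8) * L1 f n) ∧
  EqnHolds θ3 ((I5 f θ5 + I8 f θ8) * K2 f n) ((I5 f θ5 + I6 f θ6) * L2 f n) ∧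
  EqnHolds θ4 ((I6 f θ6 + I7 f θ7) * K1 f n) ((I5 f θ5 + I6 f θ6) * L2 f n) ∧
  EqnHolds θ5 ((I3 f θ3 + I4 f θ4) * L2 f n) ((I2 f θ2 + I3 f θ3) * K2 f n) ∧
  EqnHolds θ6 ((I3 f θ3 + I4 f θ4) * L2 f n) ((I1 f θ1 + I4 f θ4) * K1 f n) ∧
  EqnHolds θ7 ((I1 f θ1 + I2 f θ2) * L1 f n) ((I1 f θ1 + I4 f θ4) * K1 f n) ∧
  EqnHolds θ8 ((I1 f θ1 + I2 f θ2) * L1 f n) ((I2 f θ2 + I3 f θ3) * K2 f n)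

/-- The minimum of the eight ratios `K1/L1, K2/L1, K2/L2, K1/L2, L2/K2, L2/K1, L1/K1, L1/K2`. -/
def Qmin (f : ℝ × ℝ → ℝ) (n : ℕ) : ℝ :=
  min (min (min (K1 f n / L1 f n) (K2 f n / L1 f n)) (min (K2 f n / L2 f n) (K1 f n / L2 f n)))
    (min (min (L2 f n / K2 f n) (L2 f n / K1 f n)) (min (L1 f n / K1 f n) (L1 f n / K2 f n)))

def θmin (f : ℝ × ℝ → ℝ) (n : ℕ) : ℝ := arctan (Qmin f n)

/-! ### Positivity of the integrals of the density -/

lemma IsNiceDensity.integrable {f : ℝ × ℝ → ℝ} (hf : IsNiceDensity f) : Integrable f := by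
  have hc : IsCompact Sq := isCompact_Icc.prod isCompact_Icc
  have h : IntegrableOn f Sq := hf.cont.integrableOn_compact hc
  exact (integrableOn_iff_integrable_of_support_subset
    (fun p hp => by_contra fun h' => hp (hf.vanish p h'))).1 h

/-- A nice density has positive integral over any set, measurable or not, that contains a
nondegenerate open rectangle of the square. -/
lemma IsNiceDensity.setIntegral_pos {f : ℝ × ℝ → ℝ} (hf : IsNiceDensity f) {s : Set (ℝ × ℝ)}
    {a b c d : ℝ} (hab : a < b) (hcd : c < d) (hSq : Ioo a b ×ˢ Ioo c d ⊆ Sq)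
    (hs : Ioo a b ×ˢ Ioo c d ⊆ s) : 0 < ∫ p in s, f p := by
  have hU : IsOpen (Ioo a b ×ˢ Ioo c d) := isOpen_Ioo.prod isOpen_Ioo
  have hne : (Ioo a b ×ˢ Ioo c d).Nonempty := (nonempty_Ioo.2 hab).prod (nonempty_Ioo.2 hcd)
  have hpos : ∀ᵐ p ∂(volume.restrict (Ioo a b ×ˢ Ioo c d)), 0 < f p :=
    ae_mono (Measure.restrict_mono hSq le_rfl) hf.pos_ae
  have h1 : 0 < ∫ p in Ioo a b ×ˢ Ioo c d, f p := by
    rw [integral_pos_iff_support_of_nonneg hf.nonneg hf.integrable.integrableOn]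
    have h2 : Function.support f =ᵐ[volume.restrict (Ioo a b ×ˢ Ioo c d)] (univ : Set (ℝ × ℝ)) := by
      filter_upwards [hpos] with p hp
      exact propext ⟨fun _ => trivial, fun _ => hp.ne'⟩
    rw [measure_congr h2, Measure.restrict_apply_univ]
    exact hU.measure_pos volume hne
  exact h1.trans_le (setIntegral_mono_set hf.integrable.integrableOn
    (Filter.Eventually.of_forall hf.nonneg) hs.eventuallyLE)

lemma Q1p_pos {f : ℝ × ℝ → ℝ} (hf : IsNiceDensity f) : 0 < Q1p f := by
  refine hf.setIntegral_pos (a := 0) (b := 1) (c := (-1)) (d := 1) (by norm_num)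
    (by norm_num) ?_ ?_ <;>
  · rintro ⟨x, y⟩ ⟨⟨h1, h2⟩, h3, h4⟩
    simp only [Sq, mem_prod, mem_Icc, mem_ofPred_eq] at *
    refine ⟨⟨?_, ?_⟩, ?_⟩ <;> (try constructor) <;> linarith

lemma Q1m_pos {f : ℝ × ℝ → ℝ} (hf : IsNiceDensity f) : 0 < Q1m f := by
  refine hf.setIntegral_pos (a := (-1)) (b := 0) (c := (-1)) (d := 1) (by norm_num)
    (by norm_num) ?_ ?_ <;>
  · rintro ⟨x, y⟩ ⟨⟨h1, h2⟩, h3, h4⟩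
    simp only [Sq, mem_prod, mem_Icc, mem_ofPred_eq] at *
    refine ⟨⟨?_, ?_⟩, ?_⟩ <;> (try constructor) <;> linarith

lemma Q2p_pos {f : ℝ × ℝ → ℝ} (hf : IsNiceDensity f) : 0 < Q2p f := by
  refine hf.setIntegral_pos (a := (-1)) (b := 1) (c := 0) (d := 1) (by norm_num)
    (by norm_num) ?_ ?_ <;>
  · rintro ⟨x, y⟩ ⟨⟨h1, h2⟩, h3, h4⟩
    simp only [Sq, mem_prod, mem_Icc, mem_ofPred_eq] at *
    refine ⟨⟨?_, ?_⟩, ?_⟩ <;> (try constructor) <;> linarith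

lemma Q2m_pos {f : ℝ × ℝ → ℝ} (hf : IsNiceDensity f) : 0 < Q2m f := by
  refine hf.setIntegral_pos (a := (-1)) (b := 1) (c := (-1)) (d := 0) (by norm_num)
    (by norm_num) ?_ ?_ <;>
  · rintro ⟨x, y⟩ ⟨⟨h1, h2⟩, h3, h4⟩
    simp only [Sq, mem_prod, mem_Icc, mem_ofPred_eq] at *
    refine ⟨⟨?_, ?_⟩, ?_⟩ <;> (try constructor) <;> linarith

/-- The slope defining a region with positive angle: `tan θ`, or `1` for the full quadrant. -/
lemma exists_slope {θ : ℝ} (h0 : 0 < θ) (h : θ ≤ π / 2) :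
    ∃ m : ℝ, 0 < m ∧ ∀ a b : ℝ, a < b * m → θ = π / 2 ∨ a < b * tan θ := by
  rcases h.eq_or_lt with h | h
  · exact ⟨1, one_pos, fun _ _ _ => Or.inl h⟩
  · exact ⟨tan θ, tan_pos_of_pos_of_lt_pi_div_two h0 h, fun _ _ h => Or.inr h⟩

lemma I1_pos {f : ℝ × ℝ → ℝ} (hf : IsNiceDensity f) {θ : ℝ} (h0 : 0 < θ) (h : θ ≤ π / 2) :
    0 < I1 f θ := by
  obtain ⟨m, hm, hslope⟩ := exists_slope h0 h
  have hmin : 0 < min 1 (m / 2) := lt_min one_pos (half_pos hm)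
  have hm1 := min_le_left 1 (m / 2)
  have hm2 := min_le_right 1 (m / 2)
  refine hf.setIntegral_pos (a := (1 / 2)) (b := 1)
    (c := 0) (d := (min 1 (m / 2))) (by linarith) (by linarith) ?_ ?_
  · rintro ⟨x, y⟩ ⟨⟨h1, h2⟩, h3, h4⟩
    simp only [Sq, mem_prod, mem_Icc] at *
    exact ⟨⟨by linarith, by linarith⟩, by linarith, by linarith⟩
  · rintro ⟨x, y⟩ ⟨⟨h1, h2⟩, h3, h4⟩
    simp only at h1 h2 h3 h4
    exact ⟨by simp only; linarith, by simp only; linarith, by simp only; linarith,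
      hslope _ _ (by simp only; nlinarith)⟩

lemma I1_nonneg {f : ℝ × ℝ → ℝ} (hf : IsNiceDensity f) (θ : ℝ) : 0 ≤ I1 f θ :=
  integral_nonneg hf.nonneg

lemma I2_pos {f : ℝ × ℝ → ℝ} (hf : IsNiceDensity f) {θ : ℝ} (h0 : 0 < θ) (h : θ ≤ π / 2) :
    0 < I2 f θ := by
  obtain ⟨m, hm, hslope⟩ := exists_slope h0 h
  have hmin : 0 < min 1 (m / 2) := lt_min one_pos (half_pos hm)
  have hm1 := min_le_left 1 (m / 2)
  have hm2 := min_le_right 1 (m / 2)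
  refine hf.setIntegral_pos (a := (-1)) (b := (-(1 / 2)))
    (c := 0) (d := (min 1 (m / 2))) (by linarith) (by linarith) ?_ ?_
  · rintro ⟨x, y⟩ ⟨⟨h1, h2⟩, h3, h4⟩
    simp only [Sq, mem_prod, mem_Icc] at *
    exact ⟨⟨by linarith, by linarith⟩, by linarith, by linarith⟩
  · rintro ⟨x, y⟩ ⟨⟨h1, h2⟩, h3, h4⟩
    simp only at h1 h2 h3 h4
    exact ⟨by simp only; linarith, by simp only; linarith, by simp only; linarith,
      hslope _ _ (by simp only; nlinarith)⟩

lemma I2_nonneg {f : ℝ × ℝ → ℝ} (hf : IsNiceDensity f) (θ : ℝ) : 0 ≤ I2 f θ :=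
  integral_nonneg hf.nonneg

lemma I3_pos {f : ℝ × ℝ → ℝ} (hf : IsNiceDensity f) {θ : ℝ} (h0 : 0 < θ) (h : θ ≤ π / 2) :
    0 < I3 f θ := by
  obtain ⟨m, hm, hslope⟩ := exists_slope h0 h
  have hmin : 0 < min 1 (m / 2) := lt_min one_pos (half_pos hm)
  have hm1 := min_le_left 1 (m / 2)
  have hm2 := min_le_right 1 (m / 2)
  refine hf.setIntegral_pos (a := (-1)) (b := (-(1 / 2)))
    (c := (-(min 1 (m / 2)))) (d := 0) (by linarith) (by linarith) ?_ ?_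
  · rintro ⟨x, y⟩ ⟨⟨h1, h2⟩, h3, h4⟩
    simp only [Sq, mem_prod, mem_Icc] at *
    exact ⟨⟨by linarith, by linarith⟩, by linarith, by linarith⟩
  · rintro ⟨x, y⟩ ⟨⟨h1, h2⟩, h3, h4⟩
    simp only at h1 h2 h3 h4
    exact ⟨by simp only; linarith, by simp only; linarith, by simp only; linarith,
      hslope _ _ (by simp only; nlinarith)⟩

lemma I3_nonneg {f : ℝ × ℝ → ℝ} (hf : IsNiceDensity f) (θ : ℝ) : 0 ≤ I3 f θ :=
  integral_nonneg hf.nonneg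

lemma I4_pos {f : ℝ × ℝ → ℝ} (hf : IsNiceDensity f) {θ : ℝ} (h0 : 0 < θ) (h : θ ≤ π / 2) :
    0 < I4 f θ := by
  obtain ⟨m, hm, hslope⟩ := exists_slope h0 h
  have hmin : 0 < min 1 (m / 2) := lt_min one_pos (half_pos hm)
  have hm1 := min_le_left 1 (m / 2)
  have hm2 := min_le_right 1 (m / 2)
  refine hf.setIntegral_pos (a := (1 / 2)) (b := 1)
    (c := (-(min 1 (m / 2)))) (d := 0) (by linarith) (by linarith) ?_ ?_
  · rintro ⟨x, y⟩ ⟨⟨h1, h2⟩, h3, h4⟩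
    simp only [Sq, mem_prod, mem_Icc] at *
    exact ⟨⟨by linarith, by linarith⟩, by linarith, by linarith⟩
  · rintro ⟨x, y⟩ ⟨⟨h1, h2⟩, h3, h4⟩
    simp only at h1 h2 h3 h4
    exact ⟨by simp only; linarith, by simp only; linarith, by simp only; linarith,
      hslope _ _ (by simp only; nlinarith)⟩

lemma I4_nonneg {f : ℝ × ℝ → ℝ} (hf : IsNiceDensity f) (θ : ℝ) : 0 ≤ I4 f θ :=
  integral_nonneg hf.nonneg

lemma I5_pos {f : ℝ × ℝ → ℝ} (hf : IsNiceDensity f) {θ : ℝ} (h0 : 0 < θ) (h : θ ≤ π / 2) :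
    0 < I5 f θ := by
  obtain ⟨m, hm, hslope⟩ := exists_slope h0 h
  have hmin : 0 < min 1 (m / 2) := lt_min one_pos (half_pos hm)
  have hm1 := min_le_left 1 (m / 2)
  have hm2 := min_le_right 1 (m / 2)
  refine hf.setIntegral_pos (a := 0) (b := (min 1 (m / 2)))
    (c := (1 / 2)) (d := 1) (by linarith) (by linarith) ?_ ?_
  · rintro ⟨x, y⟩ ⟨⟨h1, h2⟩, h3, h4⟩
    simp only [Sq, mem_prod, mem_Icc] at *
    exact ⟨⟨by linarith, by linarith⟩, by linarith, by linarith⟩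
  · rintro ⟨x, y⟩ ⟨⟨h1, h2⟩, h3, h4⟩
    simp only at h1 h2 h3 h4
    exact ⟨by simp only; linarith, by simp only; linarith, by simp only; linarith,
      hslope _ _ (by simp only; nlinarith)⟩

lemma I5_nonneg {f : ℝ × ℝ → ℝ} (hf : IsNiceDensity f) (θ : ℝ) : 0 ≤ I5 f θ :=
  integral_nonneg hf.nonneg

lemma I6_pos {f : ℝ × ℝ → ℝ} (hf : IsNiceDensity f) {θ : ℝ} (h0 : 0 < θ) (h : θ ≤ π / 2) :
    0 < I6 f θ := by
  obtain ⟨m, hm, hslope⟩ := exists_slope h0 h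
  have hmin : 0 < min 1 (m / 2) := lt_min one_pos (half_pos hm)
  have hm1 := min_le_left 1 (m / 2)
  have hm2 := min_le_right 1 (m / 2)
  refine hf.setIntegral_pos (a := (-(min 1 (m / 2)))) (b := 0)
    (c := (1 / 2)) (d := 1) (by linarith) (by linarith) ?_ ?_
  · rintro ⟨x, y⟩ ⟨⟨h1, h2⟩, h3, h4⟩
    simp only [Sq, mem_prod, mem_Icc] at *
    exact ⟨⟨by linarith, by linarith⟩, by linarith, by linarith⟩
  · rintro ⟨x, y⟩ ⟨⟨h1, h2⟩, h3, h4⟩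
    simp only at h1 h2 h3 h4
    exact ⟨by simp only; linarith, by simp only; linarith, by simp only; linarith,
      hslope _ _ (by simp only; nlinarith)⟩

lemma I6_nonneg {f : ℝ × ℝ → ℝ} (hf : IsNiceDensity f) (θ : ℝ) : 0 ≤ I6 f θ :=
  integral_nonneg hf.nonneg

lemma I7_pos {f : ℝ × ℝ → ℝ} (hf : IsNiceDensity f) {θ : ℝ} (h0 : 0 < θ) (h : θ ≤ π / 2) :
    0 < I7 f θ := by
  obtain ⟨m, hm, hslope⟩ := exists_slope h0 h
  have hmin : 0 < min 1 (m / 2) := lt_min one_pos (half_pos hm)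
  have hm1 := min_le_left 1 (m / 2)
  have hm2 := min_le_right 1 (m / 2)
  refine hf.setIntegral_pos (a := (-(min 1 (m / 2)))) (b := 0)
    (c := (-1)) (d := (-(1 / 2))) (by linarith) (by linarith) ?_ ?_
  · rintro ⟨x, y⟩ ⟨⟨h1, h2⟩, h3, h4⟩
    simp only [Sq, mem_prod, mem_Icc] at *
    exact ⟨⟨by linarith, by linarith⟩, by linarith, by linarith⟩
  · rintro ⟨x, y⟩ ⟨⟨h1, h2⟩, h3, h4⟩
    simp only at h1 h2 h3 h4
    exact ⟨by simp only; linarith, by simp only; linarith, by simp only; linarith,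
      hslope _ _ (by simp only; nlinarith)⟩

lemma I7_nonneg {f : ℝ × ℝ → ℝ} (hf : IsNiceDensity f) (θ : ℝ) : 0 ≤ I7 f θ :=
  integral_nonneg hf.nonneg

lemma I8_pos {f : ℝ × ℝ → ℝ} (hf : IsNiceDensity f) {θ : ℝ} (h0 : 0 < θ) (h : θ ≤ π / 2) :
    0 < I8 f θ := by
  obtain ⟨m, hm, hslope⟩ := exists_slope h0 h
  have hmin : 0 < min 1 (m / 2) := lt_min one_pos (half_pos hm)
  have hm1 := min_le_left 1 (m / 2)
  have hm2 := min_le_right 1 (m / 2)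
  refine hf.setIntegral_pos (a := 0) (b := (min 1 (m / 2)))
    (c := (-1)) (d := (-(1 / 2))) (by linarith) (by linarith) ?_ ?_
  · rintro ⟨x, y⟩ ⟨⟨h1, h2⟩, h3, h4⟩
    simp only [Sq, mem_prod, mem_Icc] at *
    exact ⟨⟨by linarith, by linarith⟩, by linarith, by linarith⟩
  · rintro ⟨x, y⟩ ⟨⟨h1, h2⟩, h3, h4⟩
    simp only at h1 h2 h3 h4
    exact ⟨by simp only; linarith, by simp only; linarith, by simp only; linarith,
      hslope _ _ (by simp only; nlinarith)⟩

lemma I8_nonneg {f : ℝ × ℝ → ℝ} (hf : IsNiceDensity f) (θ : ℝ) : 0 ≤ I8 f θ :=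
  integral_nonneg hf.nonneg

/-! ### Consequences of the equilibrium equations -/

/-- An angle is at least `arctan q` when its equation has numerator factor `A > 0` at least the
denominator factor `B` and weight ratio `K / L ≥ q`; for `B = 0` the angle is `π / 2`. -/
lemma EqnHolds.arctan_le {θ A B K L q : ℝ} (h : EqnHolds θ (A * K) (B * L)) (hK : 0 < K)
    (hL : 0 < L) (hA : 0 < A) (hB : 0 ≤ B) (hBA : B ≤ A) (hq : q ≤ K / L) : arctan q ≤ θ := by
  rcases hB.eq_or_lt with rfl | hB
  · simp only [EqnHolds, zero_mul, if_true, (mul_pos hA hK).ne', false_or] at h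
    exact h ▸ (arctan_lt_pi_div_two q).le
  · rw [EqnHolds, if_neg (mul_pos hB hL).ne'] at h
    rw [h]
    refine arctan_mono (hq.trans ?_)
    rw [div_le_div_iff₀ hL (mul_pos hB hL)]
    nlinarith [mul_pos hK hL]

/-- Two opposite equations whose numerators and denominators have the same total: `A < B` and
`C < D` cannot both hold, so in one of them the numerator factor is at least the denominator
factor. -/
lemma arctan_le_or {θ θ' A B C D K L K' L' q : ℝ} (h : EqnHolds θ (A * K) (B * L))
    (h' : EqnHolds θ' (C * K') (D * L')) (hK : 0 < K) (hL : 0 < L) (hK' : 0 < K') (hL' : 0 < L')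
    (hA : 0 ≤ A) (hB : 0 ≤ B) (hD : 0 ≤ D) (hsum : A + C = B + D) (hpos : 0 < A + C)
    (hq : q ≤ K / L) (hq' : q ≤ K' / L') : arctan q ≤ θ ∨ arctan q ≤ θ' := by
  by_cases hc : B ≤ A ∧ 0 < A
  · exact Or.inl (h.arctan_le hK hL hc.2 hB hc.1 hq)
  · have hDC : D ≤ C ∧ 0 < C := by
      rcases hA.eq_or_lt with rfl | hA
      · exact ⟨by linarith, by linarith⟩
      · have : A < B := not_le.1 fun h => hc ⟨h, hA⟩
        exact ⟨by linarith, by linarith⟩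
    exact Or.inr (h'.arctan_le hK' hL' hDC.2 hD hDC.1 hq')

lemma EqnHolds.pos {θ A B K L : ℝ} (h : EqnHolds θ (A * K) (B * L)) (hK : 0 < K)
    (hL : 0 < L) (hA : 0 < A) (hB : 0 ≤ B) : 0 < θ := by
  rcases hB.eq_or_lt with rfl | hB
  · simp only [EqnHolds, zero_mul, if_true, (mul_pos hA hK).ne', false_or] at h
    exact h ▸ pi_div_two_pos
  · rw [EqnHolds, if_neg (mul_pos hB hL).ne'] at h
    rw [h]
    exact arctan_pos.2 (div_pos (mul_pos hA hK) (mul_pos hB hL))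

lemma two_le_card_filter {q a b c d : ℝ} (h : q ≤ a ∨ q ≤ c) (h' : q ≤ b ∨ q ≤ d) :
    2 ≤ (Finset.univ.filter fun i => q ≤ ![a, b, c, d] i).card := by
  refine Finset.one_lt_card.2 ?_
  rcases h with h | h <;> rcases h' with h' | h'
  · exact ⟨0, by simpa using h, 1, by simpa using h', by decide⟩
  · exact ⟨0, by simpa using h, 3, by simpa using h', by decide⟩
  · exact ⟨2, by simpa using h, 1, by simpa using h', by decide⟩
  · exact ⟨2, by simpa using h, 3, by simpa using h', by decide⟩

/-- At any non-trivial solution of the equilibrium system, at least two of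
`θ1,…,θ4` and at least two of `θ5,…,θ8` are `≥ θmin = arctan Qmin`. -/
theorem two_angles_ge_thetamin (n : ℕ) (hodd : Odd n) (hn : 3 ≤ n)
    (f : ℝ × ℝ → ℝ) (hf : IsNiceDensity f)
    (θ1 θ2 θ3 θ4 θ5 θ6 θ7 θ8 : ℝ)
    (h1 : θ1 ∈ Set.Icc (0 : ℝ) (π / 2)) (h2 : θ2 ∈ Set.Icc (0 : ℝ) (π / 2))
    (h3 : θ3 ∈ Set.Icc (0 : ℝ) (π / 2)) (h4 : θ4 ∈ Set.Icc (0 : ℝ) (π / 2))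
    (h5 : θ5 ∈ Set.Icc (0 : ℝ) (π / 2)) (h6 : θ6 ∈ Set.Icc (0 : ℝ) (π / 2))
    (h7 : θ7 ∈ Set.Icc (0 : ℝ) (π / 2)) (h8 : θ8 ∈ Set.Icc (0 : ℝ) (π / 2))
    (heq : EqSys f n θ1 θ2 θ3 θ4 θ5 θ6 θ7 θ8)
    (hpos : 0 < θ1 ∨ 0 < θ2 ∨ 0 < θ3 ∨ 0 < θ4 ∨ 0 < θ5 ∨ 0 < θ6 ∨ 0 < θ7 ∨ 0 < θ8) :
    2 ≤ (Finset.univ.filter fun i => θmin f n ≤ ![θ1, θ2, θ3, θ4] i).card ∧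
    2 ≤ (Finset.univ.filter fun i => θmin f n ≤ ![θ5, θ6, θ7, θ8] i).card := by
  obtain ⟨e1, e2, e3, e4, e5, e6, e7, e8⟩ := heq
  have hQ1p := Q1p_pos hf
  have hQ1m := Q1m_pos hf
  have hQ2p := Q2p_pos hf
  have hQ2m := Q2m_pos hf
  have hK1 : 0 < K1 f n := by unfold K1; positivity
  have hK2 : 0 < K2 f n := by unfold K2; positivity
  have hL1 : 0 < L1 f n := by unfold L1; positivity
  have hL2 : 0 < L2 f n := by unfold L2; positivity
  have i1 := I1_nonneg hf θ1
  have i2 := I2_nonneg hf θ2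
  have i3 := I3_nonneg hf θ3
  have i4 := I4_nonneg hf θ4
  have i5 := I5_nonneg hf θ5
  have i6 := I6_nonneg hf θ6
  have i7 := I7_nonneg hf θ7
  have i8 := I8_nonneg hf θ8
  have p1 : 0 < θ1 → 0 < I1 f θ1 := fun h => I1_pos hf h h1.2
  have p2 : 0 < θ2 → 0 < I2 f θ2 := fun h => I2_pos hf h h2.2
  have p3 : 0 < θ3 → 0 < I3 f θ3 := fun h => I3_pos hf h h3.2
  have p4 : 0 < θ4 → 0 < I4 f θ4 := fun h => I4_pos hf h h4.2
  have p5 : 0 < θ5 → 0 < I5 f θ5 := fun h => I5_pos hf h h5.2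
  have p6 : 0 < θ6 → 0 < I6 f θ6 := fun h => I6_pos hf h h6.2
  have p7 : 0 < θ7 → 0 < I7 f θ7 := fun h => I7_pos hf h h7.2
  have p8 : 0 < θ8 → 0 < I8 f θ8 := fun h => I8_pos hf h h8.2
  have up : 0 < I1 f θ1 + I2 f θ2 + (I3 f θ3 + I4 f θ4) →
      0 < I5 f θ5 + I6 f θ6 + (I7 f θ7 + I8 f θ8) := by
    intro h
    by_cases hz : 0 < I1 f θ1 + I2 f θ2
    · linarith [p7 (e7.pos hL1 hK1 hz (by linarith))]
    · linarith [p5 (e5.pos hL2 hK2 (by linarith) (by linarith))]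
  have down : 0 < I5 f θ5 + I6 f θ6 + (I7 f θ7 + I8 f θ8) →
      0 < I1 f θ1 + I2 f θ2 + (I3 f θ3 + I4 f θ4) := by
    intro h
    by_cases hz : 0 < I6 f θ6 + I7 f θ7
    · linarith [p1 (e1.pos hK1 hL1 hz (by linarith))]
    · linarith [p2 (e2.pos hK2 hL1 (by linarith) (by linarith))]
  have both : 0 < I1 f θ1 + I2 f θ2 + (I3 f θ3 + I4 f θ4) ∧
      0 < I5 f θ5 + I6 f θ6 + (I7 f θ7 + I8 f θ8) := by
    rcases hpos with h | h | h | h | h | h | h | h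
    · have s := up (by linarith [p1 h])
      exact ⟨down s, s⟩
    · have s := up (by linarith [p2 h])
      exact ⟨down s, s⟩
    · have s := up (by linarith [p3 h])
      exact ⟨down s, s⟩
    · have s := up (by linarith [p4 h])
      exact ⟨down s, s⟩
    · have s := down (by linarith [p5 h])
      exact ⟨s, up s⟩
    · have s := down (by linarith [p6 h])
      exact ⟨s, up s⟩
    · have s := down (by linarith [p7 h])
      exact ⟨s, up s⟩
    · have s := down (by linarith [p8 h])
      exact ⟨s, up s⟩
  obtain ⟨sθ, sφ⟩ := both
  have q1 : Qmin f n ≤ K1 f n / L1 f n := by simp [Qmin]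
  have q2 : Qmin f n ≤ K2 f n / L1 f n := by simp [Qmin]
  have q3 : Qmin f n ≤ K2 f n / L2 f n := by simp [Qmin]
  have q4 : Qmin f n ≤ K1 f n / L2 f n := by simp [Qmin]
  have q5 : Qmin f n ≤ L2 f n / K2 f n := by simp [Qmin]
  have q6 : Qmin f n ≤ L2 f n / K1 f n := by simp [Qmin]
  have q7 : Qmin f n ≤ L1 f n / K1 f n := by simp [Qmin]
  have q8 : Qmin f n ≤ L1 f n / K2 f n := by simp [Qmin]
  exact ⟨two_le_card_filter
    (arctan_le_or e1 e3 hK1 hL1 hK2 hL2 (by linarith) (by linarith)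
      (by linarith) (by ring) (by linarith) q1 q3)
    (arctan_le_or e2 e4 hK2 hL1 hK1 hL2 (by linarith) (by linarith)
      (by linarith) (by ring) (by linarith) q2 q4),
    two_le_card_filter
    (arctan_le_or e5 e7 hL2 hK2 hL1 hK1 (by linarith) (by linarith)
      (by linarith) (by ring) (by linarith) q5 q7)
    (arctan_le_or e6 e8 hL2 hK1 hL1 hK2 (by linarith) (by linarith)
      (by linarith) (by ring) (by linarith) q6 q8)⟩
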